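/- arXiv:2107.07396 — 5 statements merged into one kernel-verified Lean document; each statement's English description precedes it below -/
import Mathlib

section
/- Let Φ be an N-function, Ψ := Φ* its complementary function, 1 < p < ∞ and p' := p/(p−1). Then lim_{t→0} Φ(t)/|t|^p = 0 if and only if lim_{t→0} Ψ(t)/|t|^{p'} = ∞. -/
/-!
Both implications are quantitative, and rest on the exponent relations `(p' - 1) * p = p'` and
`(p' - 1) * (p - 1) = 1`.

If `Φ s ≤ ε s ^ p` near `0`, testing the supremum defining `Ψ t` with `s = K t ^ (p' - 1)` gives
`Ψ t ≥ (K - ε K ^ p) t ^ p'`, which is `(K / 2) t ^ p'` for `ε = K / (2 K ^ p)`; here `K` is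
arbitrary. The supremum is finite because `Φ` is superlinear (`bddAbove_conj`).

Conversely, let `t` be a slope of a supporting line of `Φ` at `s > 0`
(`exists_supporting_slope`). Equality holds in Young's inequality, so `Φ s = s t - Ψ t`, and
`0 < t ≤ Φ (2 s) / s` is small when `s` is. If `Ψ t ≥ M t ^ p'` near `0` with `M = ε ^ (-(p' - 1))`,
then either `t ≤ ε s ^ (p - 1)`, so `Φ s ≤ s t ≤ ε s ^ p`, or `M t ^ (p' - 1) ≥ s`, so that
`Φ s ≤ s t - M t ^ p' ≤ 0`.
-/

open MeasureTheory Filter Real Set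
open scoped RealInnerProductSpace ENNReal Topology

noncomputable section

/-- An N-function: an even convex function `Φ : ℝ → [0,∞)` vanishing exactly at `0`,
with `Φ(t)/t → 0` as `t → 0` and `Φ(t)/t → ∞` as `t → ∞`. -/
def IsNFunction (Φ : ℝ → ℝ) : Prop :=
  (∀ t, Φ (-t) = Φ t) ∧ ConvexOn ℝ Set.univ Φ ∧ (∀ t, 0 ≤ Φ t) ∧
  (∀ t, Φ t = 0 ↔ t = 0) ∧
  Tendsto (fun t => Φ t / t) (𝓝[≠] (0:ℝ)) (𝓝 0) ∧
  Tendsto (fun t => Φ t / t) atTop atTop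

/-- The complementary function `Φ*(t) = sup { s|t| - Φ(s) : s ≥ 0 }` of an N-function. -/
def conjN (Φ : ℝ → ℝ) (t : ℝ) : ℝ := sSup ((fun s => s * |t| - Φ s) '' Set.Ici (0:ℝ))

/-- A property of `t` depending only on `|t|` holds near `0` iff it holds on some `(0, δ)`. -/
lemma eventually_punctured_iff_of_even {P : ℝ → Prop} (hP : ∀ t, P |t| ↔ P t) :
    (∀ᶠ t in 𝓝[≠] (0:ℝ), P t) ↔ ∃ δ > 0, ∀ t, 0 < t → t < δ → P t := by
  rw [eventually_nhdsWithin_iff, Metric.eventually_nhds_iff]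
  constructor
  · rintro ⟨δ, hδ, h⟩
    refine ⟨δ, hδ, fun t ht htδ => h ?_ ht.ne'⟩
    simpa [abs_of_pos ht] using htδ
  · rintro ⟨δ, hδ, h⟩
    refine ⟨δ, hδ, fun t htδ ht => (hP t).1 (h |t| (abs_pos.2 ht) ?_)⟩
    simpa using htδ

lemma bddAbove_conj {Φ : ℝ → ℝ} (hΦ : IsNFunction Φ) (t : ℝ) :
    BddAbove ((fun s => s * |t| - Φ s) '' Set.Ici (0:ℝ)) := by
  obtain ⟨-, -, hnn, -, -, hinf⟩ := hΦ
  obtain ⟨S, hS⟩ := eventually_atTop.1 (hinf.eventually_ge_atTop |t|)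
  refine ⟨max S 0 * |t|, ?_⟩
  rintro _ ⟨s, hs, rfl⟩
  have hs0 : 0 ≤ s := hs
  have hmax : 0 ≤ max S 0 * |t| := mul_nonneg (le_max_right _ _) (abs_nonneg _)
  rcases le_total s S with h | h
  · have := mul_le_mul_of_nonneg_right (h.trans (le_max_left S 0)) (abs_nonneg t)
    have := hnn s
    show s * |t| - Φ s ≤ _
    linarith
  · show s * |t| - Φ s ≤ _
    rcases hs0.eq_or_lt with rfl | hpos
    · have := hnn 0
      linarith
    · have h2 := (le_div_iff₀ hpos).1 (hS s h)
      linarith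

lemma young_conj {Φ : ℝ → ℝ} (hΦ : IsNFunction Φ) {s : ℝ} (hs : 0 ≤ s) (t : ℝ) :
    s * |t| - Φ s ≤ conjN Φ t :=
  le_csSup (bddAbove_conj hΦ t) ⟨s, hs, rfl⟩

lemma exists_supporting_slope {Φ : ℝ → ℝ} (hc : ConvexOn ℝ Set.univ Φ) (s : ℝ) :
    ∃ t, ∀ u, Φ s + t * (u - s) ≤ Φ u := by
  have hint : s ∈ interior (Set.univ : Set ℝ) := by simp
  refine ⟨derivWithin Φ (Ioi s) s, fun u => ?_⟩
  rcases lt_trichotomy u s with h | rfl | h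
  · have h1 := (hc.slope_le_leftDeriv_of_mem_interior (mem_univ u) hint h).trans
      (hc.leftDeriv_le_rightDeriv_of_mem_interior hint)
    rw [slope_def_field, div_le_iff₀ (by linarith)] at h1
    linarith
  · simp
  · have h1 := hc.rightDeriv_le_slope_of_mem_interior hint (mem_univ u) h
    rw [slope_def_field, le_div_iff₀ (by linarith)] at h1
    linarith

lemma conj_tendsto_atTop_of_tendsto_zero {Φ : ℝ → ℝ} {p p' : ℝ} (hΦ : IsNFunction Φ)
    (hq : 0 < p' - 1) (hqp : (p' - 1) * p = p')
    (h : ∀ ε > 0, ∃ δ > 0, ∀ s, 0 < s → s < δ → Φ s ≤ ε * s ^ p) (K : ℝ) (hK : 0 < K) :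
    ∃ δ > 0, ∀ t, 0 < t → t < δ → K / 2 * t ^ p' ≤ conjN Φ t := by
  have hKp : 0 < K ^ p := rpow_pos_of_pos hK p
  obtain ⟨δ, hδ, hs⟩ := h (K / (2 * K ^ p)) (by positivity)
  -- `t < (δ / K) ^ (1 / (p' - 1))` is exactly `K * t ^ (p' - 1) < δ`
  refine ⟨(δ / K) ^ (p' - 1)⁻¹, by positivity, fun t ht htδ => ?_⟩
  have h1 : t ^ (p' - 1) < δ / K := by
    have := rpow_lt_rpow ht.le htδ hq
    rwa [rpow_inv_rpow (by positivity) hq.ne'] at this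
  have hspos : 0 < K * t ^ (p' - 1) := by positivity
  have h2 := hs _ hspos (by rwa [lt_div_iff₀ hK, mul_comm] at h1)
  rw [mul_rpow hK.le (by positivity), ← rpow_mul ht.le, hqp] at h2
  have h3 : K / (2 * K ^ p) * (K ^ p * t ^ p') = K / 2 * t ^ p' := by
    field_simp
  have h4 := young_conj hΦ hspos.le t
  have h5 : t ^ (p' - 1) * t = t ^ p' := by
    rw [← rpow_add_one ht.ne']; simp
  rw [abs_of_pos ht, mul_assoc, h5] at h4
  linarith

lemma tendsto_zero_of_conj_tendsto_atTop {Φ : ℝ → ℝ} {p p' : ℝ} (hΦ : IsNFunction Φ)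
    (hq : 0 < p' - 1) (hqp : (p' - 1) * (p - 1) = 1)
    (h : ∀ M, ∃ δ > 0, ∀ t, 0 < t → t < δ → M * t ^ p' ≤ conjN Φ t) (ε : ℝ) (hε : 0 < ε) :
    ∃ δ > 0, ∀ s, 0 < s → s < δ → Φ s ≤ ε * s ^ p := by
  obtain ⟨-, hc, hnn, hz, hlim, -⟩ := hΦ
  obtain ⟨η, hη, hM⟩ := h (ε ^ (p' - 1))⁻¹
  obtain ⟨δ, hδ, hsmall⟩ := Metric.eventually_nhds_iff.1
    (eventually_nhdsWithin_iff.1 (hlim.eventually_lt_const (half_pos hη)))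
  refine ⟨δ / 2, by positivity, fun s hs hsδ => ?_⟩
  obtain ⟨t, ht⟩ := exists_supporting_slope hc s
  have hΦs : 0 < Φ s := lt_of_le_of_ne (hnn s) fun h0 => hs.ne' ((hz s).1 h0.symm)
  have ht0 : 0 < t := by
    have h0 := ht 0
    rw [(hz 0).2 rfl] at h0
    have : 0 < t * s := by linarith
    exact pos_of_mul_pos_left this hs.le
  have htη : t < η := by
    have h2 : Φ (2 * s) / (2 * s) < η / 2 := by
      refine hsmall ?_ (by simp [hs.ne'])
      rw [Real.dist_eq, sub_zero, abs_of_pos (by positivity)]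
      linarith
    rw [div_lt_iff₀ (by positivity)] at h2
    have h3 := ht (2 * s)
    have : t * s < η * s := by linarith
    exact lt_of_mul_lt_mul_right this hs.le
  have hconj : conjN Φ t ≤ s * t - Φ s := by
    refine csSup_le ⟨_, 0, self_mem_Ici, rfl⟩ ?_
    rintro _ ⟨u, -, rfl⟩
    have := ht u
    simp only [abs_of_pos ht0]
    linarith
  have hlow := hM t ht0 htη
  have hsp : s ^ (p - 1) * s = s ^ p := by
    rw [← rpow_add_one hs.ne']; simp
  have htp : t ^ (p' - 1) * t = t ^ p' := by
    rw [← rpow_add_one ht0.ne']; simp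
  have hψ : 0 ≤ (ε ^ (p' - 1))⁻¹ * t ^ p' := by positivity
  rcases le_total t (ε * s ^ (p - 1)) with hle | hle
  · have := mul_le_mul_of_nonneg_right hle hs.le
    rw [mul_assoc, hsp] at this
    linarith
  · have h1 := rpow_le_rpow (by positivity) hle hq.le
    rw [mul_rpow hε.le (by positivity), ← rpow_mul hs.le, mul_comm (p - 1), hqp, rpow_one] at h1
    have h2 : s ≤ (ε ^ (p' - 1))⁻¹ * t ^ (p' - 1) := by
      rw [inv_mul_eq_div, le_div_iff₀ (by positivity)]
      linarith
    have h3 := mul_le_mul_of_nonneg_right h2 ht0.le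
    rw [mul_assoc, htp] at h3
    linarith

/-- Lemma `lem:conj`, the `t → 0` part: for an N-function `Φ` with complementary
function `Ψ = Φ*`, and conjugate exponents `1 < p < ∞`, `p' = p/(p-1)`, one has
`lim_{t→0} Φ(t)/|t|^p = 0` iff `lim_{t→0} Ψ(t)/|t|^{p'} = ∞`. -/
theorem limit_at_zero_conj (Φ Ψ : ℝ → ℝ) (p p' : ℝ)
    (hΦ : IsNFunction Φ) (hΨ : Ψ = conjN Φ)
    (hp : 1 < p) (hp' : p' = p / (p - 1)) :
    Tendsto (fun t => Φ t / |t| ^ p) (𝓝[≠] (0:ℝ)) (𝓝 0) ↔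
      Tendsto (fun t => Ψ t / |t| ^ p') (𝓝[≠] (0:ℝ)) atTop := by
  subst hΨ
  have hp1 : 0 < p - 1 := by linarith
  have hq1 : (p' - 1) * (p - 1) = 1 := by
    rw [hp']; field_simp; ring
  have hq : 0 < p' - 1 := pos_of_mul_pos_left (by rw [hq1]; exact one_pos) hp1.le
  have hqp : (p' - 1) * p = p' := by linarith
  have hΦabs : ∀ t, Φ |t| = Φ t := fun t => by
    rcases abs_choice t with h | h <;> rw [h]
    exact hΦ.1 t
  have hL : Tendsto (fun t => Φ t / |t| ^ p) (𝓝[≠] (0:ℝ)) (𝓝 0) ↔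
      ∀ ε > 0, ∃ δ > 0, ∀ s, 0 < s → s < δ → Φ s ≤ ε * s ^ p := by
    have hnn : ∀ t, 0 ≤ Φ t / |t| ^ p := fun t => div_nonneg (hΦ.2.2.1 t) (by positivity)
    have hev : ∀ ε : ℝ, ∀ t, Φ |t| / |(|t|)| ^ p < ε ↔ Φ t / |t| ^ p < ε := fun ε t => by
      rw [hΦabs, abs_abs]
    rw [Metric.tendsto_nhds]
    simp only [Real.dist_eq, sub_zero, abs_of_nonneg (hnn _)]
    constructor
    · intro h ε hε
      obtain ⟨δ, hδ, H⟩ := (eventually_punctured_iff_of_even (hev ε)).1 (h ε hε)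
      refine ⟨δ, hδ, fun s hs hsδ => ?_⟩
      have := H s hs hsδ
      rw [abs_of_pos hs, div_lt_iff₀ (by positivity)] at this
      exact this.le
    · intro h ε hε
      obtain ⟨δ, hδ, H⟩ := h (ε / 2) (half_pos hε)
      refine (eventually_punctured_iff_of_even (hev ε)).2 ⟨δ, hδ, fun s hs hsδ => ?_⟩
      have h1 := H s hs hsδ
      have h2 : 0 < s ^ p := by positivity
      rw [abs_of_pos hs, div_lt_iff₀ h2]
      nlinarith
  have hR : Tendsto (fun t => conjN Φ t / |t| ^ p') (𝓝[≠] (0:ℝ)) atTop ↔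
      ∀ M, ∃ δ > 0, ∀ t, 0 < t → t < δ → M * t ^ p' ≤ conjN Φ t := by
    rw [tendsto_atTop]
    refine forall_congr' fun M => ?_
    rw [eventually_punctured_iff_of_even (fun t => by simp only [conjN, abs_abs])]
    refine exists_congr fun δ => and_congr_right fun _ => forall_congr' fun t =>
      forall_congr' fun ht => forall_congr' fun _ => ?_
    rw [abs_of_pos ht, le_div_iff₀ (by positivity)]
  rw [hL, hR]
  constructor
  · intro h M
    obtain ⟨δ, hδ, H⟩ := conj_tendsto_atTop_of_tendsto_zero hΦ hq hqp h (2 * max M 1)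
      (by positivity)
    refine ⟨δ, hδ, fun t ht htδ => le_trans ?_ (H t ht htδ)⟩
    rw [mul_div_cancel_left₀ _ two_ne_zero]
    exact mul_le_mul_of_nonneg_right (le_max_left _ _) (by positivity)
  · exact fun h ε hε => tendsto_zero_of_conj_tendsto_atTop hΦ hq hq1 h ε hε
end
end

section
/- Let F : ℝ³ → ℝ be differentiable with gradient f, F ≥ 0, and assume (F3): ⟨f(u),u⟩ ≥ 2F(u) for all u ∈ ℝ³, and (F4): whenever ⟨f(u),v⟩ = ⟨f(v),u⟩ > 0 one has F(u) − F(v) ≤ (⟨f(u),u⟩² − ⟨f(u),v⟩²)/(2⟨f(u),u⟩). Then for every u, ψ ∈ ℝ³ and every t ≥ 0: ⟨f(u), ((t²−1)/2)u + tψ⟩ + F(u) − F(tu + ψ) ≤ 0. -/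
/-!
Write `A = ⟪f u, u⟫` and `φ(t) = ⟪f u, ((t² - 1)/2) u + t ψ⟫ + F u - F (t u + ψ)`.  Then
`φ(0) ≤ 0` by (F3), `φ'(t) = ⟪f u, v⟫ - ⟪f v, u⟫` with `v = t u + ψ`, and (F3), (F4) give
`φ ≤ 0` at critical points.  No superquadratic growth of `F` is assumed, so a maximum of `φ` on
`[0, ∞)` need not exist; what remains is that once `φ` is positive it is strictly increasing
(`phi_lt`, `deriv_pos`).

On a single ray (`ψ = 0`) this makes `F (t u)` convex as a function of `t²`, so `φ ≤ 0` there
(`phi_zero_nonpos`).  If `φ` is positive somewhere, then it stays positive, and (F3) forces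
`F (T u) ≤ T² A / 2` for all `T > 0`.  With the convexity this gives
`F (s u) = F u + (s² - 1) A / 2` and `f (s u) = s f u` for `s ≥ 1` (`ray_eq`, `ray_grad`).

Normalise `ψ ⟂ f u`, fix `x ≥ 1` with `φ(x) > 0`, and put
`h(y) = F (x u + y ψ) - F u - (x² - 1) A / 2`.  Then `h(0) = 0`, `h'(0) = 0`, `h(1) < 0`.  Where
`h(y) < 0`, the strict monotonicity shows `⟪f v, u⟫ < ⟪f u, v⟫` for `v = x u + y ψ`; hence the pair
`(v, s u)` with exchanged roles cannot violate the inequality, for any `s ≥ 1`.  The cases `s = 1`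
and `s → ∞` combine to `y h'(y) ≥ h(y)`, i.e. `h(y) / y` is nondecreasing where negative, which
contradicts `h'(0) = 0` and `h(1) < 0` (`nonneg_of_mul_deriv_ge`).
-/

open MeasureTheory Filter Real Set
open scoped RealInnerProductSpace ENNReal Topology

noncomputable section

/-! ### The hypotheses, `φ`, and a one-variable lemma -/

/-- The hypotheses on `F` and its gradient `f`: nonnegativity, (F3) and (F4). -/
structure NehariHyp {E : Type*} [NormedAddCommGroup E] [InnerProductSpace ℝ E] [CompleteSpace E]
    (F : E → ℝ) (f : E → E) : Prop where
  grad : ∀ u, HasGradientAt F (f u) u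
  nonneg : ∀ u, 0 ≤ F u
  F3 : ∀ u, 2 * F u ≤ ⟪f u, u⟫
  F4 : ∀ u v, ⟪f u, v⟫ = ⟪f v, u⟫ → 0 < ⟪f u, v⟫ →
      F u - F v ≤ (⟪f u, u⟫ ^ 2 - ⟪f u, v⟫ ^ 2) / (2 * ⟪f u, u⟫)

/-- The left-hand side of the inequality, with the inner product expanded. -/
def nehariPhi {E : Type*} [NormedAddCommGroup E] [InnerProductSpace ℝ E]
    (F : E → ℝ) (f : E → E) (u ψ : E) (t : ℝ) : ℝ :=
  (t ^ 2 - 1) / 2 * ⟪f u, u⟫ + t * ⟪f u, ψ⟫ + F u - F (t • u + ψ)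

/-- If `h(y) / y` is nondecreasing wherever `h` is negative, and `h` starts at `0` with nonnegative
value and slope, then `h` does not become negative. -/
theorem nonneg_of_mul_deriv_ge (h h' : ℝ → ℝ)
    (hd : ∀ y ∈ Set.Icc (0 : ℝ) 1, HasDerivAt h (h' y) y)
    (h0 : 0 ≤ h 0) (h0' : 0 ≤ h' 0)
    (hb : ∀ y ∈ Set.Ioc (0 : ℝ) 1, h y < 0 → h y ≤ y * h' y) : 0 ≤ h 1 := by
  by_contra! hm
  have hc : ContinuousOn h (Set.Icc 0 1) := fun y hy => (hd y hy).continuousAt.continuousWithinAt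
  -- `z` is the last point where `h` lies on or above the line of slope `h 1 / 2` through `0`.
  have hcomp : IsCompact (Set.Icc (0 : ℝ) 1 ∩ (fun y => h y - h 1 / 2 * y) ⁻¹' Set.Ici 0) := by
    refine isCompact_Icc.of_isClosed_subset ?_ Set.inter_subset_left
    exact ContinuousOn.preimage_isClosed_of_isClosed (by fun_prop) isClosed_Icc isClosed_Ici
  obtain ⟨z, ⟨⟨hz0, hz1⟩, hzS⟩, hzmax⟩ := hcomp.exists_isGreatest ⟨0, by simp [h0]⟩
  simp only [Set.mem_preimage, Set.mem_Ici] at hzS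
  have hlast : ∀ y, z < y → y ≤ 1 → h y < h 1 / 2 * y := by
    intro y hy hy1
    by_contra! hcon
    have := hzmax ⟨⟨by linarith, hy1⟩, by simp only [Set.mem_preimage, Set.mem_Ici]; linarith⟩
    linarith
  have hz1' : z < 1 := by
    rcases hz1.lt_or_eq with h1 | h1
    · exact h1
    · subst h1; linarith
  rcases hz0.eq_or_lt with hz | hz
  · subst hz
    have hder := hd 0 ⟨le_rfl, zero_le_one⟩
    have hs := (hasDerivAt_iff_tendsto_slope_zero.1 hder).mono_left
      (nhdsGT_le_nhdsNE 0)
    have hle : h' 0 ≤ h 1 / 2 := by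
      refine le_of_tendsto hs ?_
      filter_upwards [Ioo_mem_nhdsGT (zero_lt_one : (0 : ℝ) < 1)] with y hy
      have h2 := hlast y hy.1 hy.2.le
      have : y⁻¹ * (h (0 + y) - h 0) ≤ y⁻¹ * (h 1 / 2 * y) :=
        mul_le_mul_of_nonneg_left (by rw [zero_add]; linarith) (inv_nonneg.2 hy.1.le)
      calc _ ≤ y⁻¹ * (h 1 / 2 * y) := this
        _ = h 1 / 2 := by field_simp [hy.1.ne']
    linarith
  · have hmono : MonotoneOn (fun y => h y / y) (Set.Icc z 1) := by
      have hdd : ∀ y ∈ Set.Icc z 1, HasDerivAt (fun y => h y / y)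
          ((h' y * y - h y * 1) / y ^ 2) y := fun y hy =>
        (hd y ⟨hz0.trans hy.1, hy.2⟩).div (hasDerivAt_id' y) (by linarith [hy.1])
      refine monotoneOn_of_deriv_nonneg (convex_Icc z 1)
        (fun y hy => (hdd y hy).continuousAt.continuousWithinAt)
        (fun y hy => (hdd y (interior_subset hy)).differentiableAt.differentiableWithinAt) ?_
      intro y hy
      rw [(hdd y (interior_subset hy)).deriv]
      rw [interior_Icc] at hy
      have h1 := hlast y hy.1 hy.2.le
      have h2 := hb y ⟨hz.trans hy.1, hy.2.le⟩ (by nlinarith [hz.trans hy.1])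
      exact div_nonneg (by linarith) (sq_nonneg y)
    have h1 := hmono ⟨le_rfl, hz1⟩ ⟨hz1, le_rfl⟩ hz1
    have h2 : h 1 / 2 ≤ h z / z := by rw [le_div_iff₀ hz]; linarith
    simp only [div_one] at h1
    linarith

namespace NehariHyp

variable {E : Type*} [NormedAddCommGroup E] [InnerProductSpace ℝ E] [CompleteSpace E]
  {F : E → ℝ} {f : E → E}

/-! ### Monotonicity of `φ` where it is positive -/

theorem hasDerivAt_line (H : NehariHyp F f) (u ψ : E) (t : ℝ) :
    HasDerivAt (fun t : ℝ => F (t • u + ψ)) ⟪f (t • u + ψ), u⟫ t := by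
  have h1 : HasDerivAt (fun t : ℝ => t • u + ψ) ((1 : ℝ) • u) t :=
    ((hasDerivAt_id' t).smul_const u).add_const ψ
  have h2 := (H.grad (t • u + ψ)).hasFDerivAt.comp_hasDerivAt t h1
  exact h2.congr_deriv (by simp)

theorem hasDerivAt_phi (H : NehariHyp F f) (u ψ : E) (t : ℝ) :
    HasDerivAt (nehariPhi F f u ψ) (⟪f u, t • u + ψ⟫ - ⟪f (t • u + ψ), u⟫) t := by
  have h1 : HasDerivAt (fun t : ℝ => (t ^ 2 - 1) / 2 * ⟪f u, u⟫ + t * ⟪f u, ψ⟫ + F u)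
      (t * ⟪f u, u⟫ + ⟪f u, ψ⟫) t := by
    have := (((((hasDerivAt_id' t).pow 2).sub_const 1).div_const 2).mul_const ⟪f u, u⟫).add
      ((hasDerivAt_id' t).mul_const ⟪f u, ψ⟫) |>.add_const (F u)
    exact this.congr_deriv (by simp)
  have := h1.sub (H.hasDerivAt_line u ψ t)
  rw [inner_add_right, inner_smul_right]
  exact this

theorem A_nonneg (H : NehariHyp F f) (u : E) : 0 ≤ ⟪f u, u⟫ := by
  linarith [H.F3 u, H.nonneg u]

/-- If `⟪f u, u⟫ = 0` then `u` is a zero, hence a minimum, of `F`. -/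
theorem f_eq_zero (H : NehariHyp F f) (u : E) (hA : ⟪f u, u⟫ = 0) : f u = 0 := by
  have h0 : F u = 0 := by linarith [H.F3 u, H.nonneg u]
  have hmin : IsLocalMin F u := Filter.Eventually.of_forall fun v => by
    rw [h0]; exact H.nonneg v
  have := hmin.hasFDerivAt_eq_zero (H.grad u).hasFDerivAt
  simpa using this

theorem phi_eq {E : Type*} [NormedAddCommGroup E] [InnerProductSpace ℝ E]
    {F : E → ℝ} {f : E → E} (u ψ : E) (t : ℝ) : nehariPhi F f u ψ t =
    -(t ^ 2 + 1) / 2 * ⟪f u, u⟫ + t * ⟪f u, t • u + ψ⟫ + F u - F (t • u + ψ) := by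
  rw [nehariPhi, inner_add_right, inner_smul_right]; ring

theorem inner_pos_of_phi_pos (H : NehariHyp F f) (u ψ : E) (t : ℝ) (ht : 0 ≤ t)
    (hp : 0 < nehariPhi F f u ψ t) : 0 < ⟪f u, t • u + ψ⟫ := by
  by_contra! hb
  rw [phi_eq] at hp
  nlinarith [H.F3 u, H.nonneg (t • u + ψ), H.A_nonneg u, mul_nonneg ht (neg_nonneg.2 hb),
    mul_nonneg (sq_nonneg t) (H.A_nonneg u)]

theorem A_pos_of_phi_pos (H : NehariHyp F f) (u ψ : E) (t : ℝ) (ht : 0 ≤ t)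
    (hp : 0 < nehariPhi F f u ψ t) : 0 < ⟪f u, u⟫ := by
  rcases (H.A_nonneg u).eq_or_lt with h | h
  · have := H.inner_pos_of_phi_pos u ψ t ht hp
    rw [H.f_eq_zero u h.symm] at this
    simp at this
  · exact h

theorem phi_at_zero (H : NehariHyp F f) (u ψ : E) : nehariPhi F f u ψ 0 ≤ 0 := by
  rw [phi_eq]
  have := H.nonneg ((0 : ℝ) • u + ψ)
  linarith [H.F3 u]

/-- The content of (F4): `φ` has no critical point at a positive value. -/
theorem deriv_ne_zero (H : NehariHyp F f) (u ψ : E) (t : ℝ) (ht : 0 ≤ t)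
    (hp : 0 < nehariPhi F f u ψ t) : ⟪f u, t • u + ψ⟫ - ⟪f (t • u + ψ), u⟫ ≠ 0 := by
  intro hD
  have hb := H.inner_pos_of_phi_pos u ψ t ht hp
  have hA := H.A_pos_of_phi_pos u ψ t ht hp
  have h4 := H.F4 u (t • u + ψ) (sub_eq_zero.1 hD) hb
  rw [phi_eq] at hp
  rw [le_div_iff₀ (by linarith)] at h4
  nlinarith [sq_nonneg (⟪f u, t • u + ψ⟫ - t * ⟪f u, u⟫)]

theorem phi_lt (H : NehariHyp F f) (u ψ : E) (t₁ t₂ : ℝ) (ht : 0 ≤ t₁) (h12 : t₁ < t₂)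
    (hp : 0 < nehariPhi F f u ψ t₁) : nehariPhi F f u ψ t₁ < nehariPhi F f u ψ t₂ := by
  by_contra! hle
  have h0 := H.phi_at_zero u ψ
  have ht1 : 0 < t₁ := by
    rcases ht.eq_or_lt with h | h
    · rw [← h] at hp; linarith
    · exact h
  have hc : ContinuousOn (nehariPhi F f u ψ) (Set.Icc 0 t₂) := fun t _ =>
    (H.hasDerivAt_phi u ψ t).continuousAt.continuousWithinAt
  obtain ⟨c, hcI, hcmax⟩ := isCompact_Icc.exists_isMaxOn ⟨t₁, ht, h12.le⟩ hc
  -- If the maximum sits at the right end point, then `t₁` is also a maximum point.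
  obtain ⟨d, ⟨hd0, hd2⟩, hdmax, hdpos⟩ : ∃ d ∈ Set.Ioo 0 t₂,
      IsMaxOn (nehariPhi F f u ψ) (Set.Icc 0 t₂) d ∧ 0 < nehariPhi F f u ψ d := by
    have h1 : nehariPhi F f u ψ t₁ ≤ nehariPhi F f u ψ c := hcmax ⟨ht, h12.le⟩
    rcases hcI.2.eq_or_lt with h | h
    · refine ⟨t₁, ⟨ht1, h12⟩, fun x hx => ?_, hp⟩
      have h2 : nehariPhi F f u ψ x ≤ nehariPhi F f u ψ c := hcmax hx
      rw [h] at h2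
      exact h2.trans hle
    · refine ⟨c, ⟨?_, h⟩, hcmax, hp.trans_le h1⟩
      rcases hcI.1.eq_or_lt with h2 | h2
      · rw [← h2] at h1; linarith
      · exact h2
  have hloc : IsLocalMax (nehariPhi F f u ψ) d := hdmax.isLocalMax (Icc_mem_nhds hd0 hd2)
  exact H.deriv_ne_zero u ψ d hd0.le hdpos (hloc.hasDerivAt_eq_zero (H.hasDerivAt_phi u ψ d))

theorem deriv_pos (H : NehariHyp F f) (u ψ : E) (t : ℝ) (ht : 0 ≤ t)
    (hp : 0 < nehariPhi F f u ψ t) : 0 < ⟪f u, t • u + ψ⟫ - ⟪f (t • u + ψ), u⟫ := by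
  refine lt_of_le_of_ne ?_ (H.deriv_ne_zero u ψ t ht hp).symm
  have hs := (hasDerivAt_iff_tendsto_slope_zero.1 (H.hasDerivAt_phi u ψ t)).mono_left
    (nhdsGT_le_nhdsNE 0)
  refine ge_of_tendsto hs ?_
  filter_upwards [self_mem_nhdsWithin] with y (hy : 0 < y)
  exact mul_nonneg (inv_nonneg.2 hy.le)
    (sub_nonneg.2 (H.phi_lt u ψ t (t + y) ht (by linarith) hp).le)

/-! ### Behaviour along a ray -/

/-- Quadratic growth along rays, a consequence of (F3). -/
theorem sq_mul_le (H : NehariHyp F f) (x : E) (s : ℝ) (hs : 1 ≤ s) :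
    s ^ 2 * F x ≤ F (s • x) := by
  have hdd : ∀ t ∈ Set.Icc 1 s, HasDerivAt (fun t : ℝ => F (t • x) / t ^ 2)
      ((⟪f (t • x), x⟫ * t ^ 2 - F (t • x) * (2 * t)) / (t ^ 2) ^ 2) t := by
    intro t ht
    have h1 := H.hasDerivAt_line x 0 t
    simp only [add_zero] at h1
    have h2 : HasDerivAt (fun t : ℝ => t ^ 2) (2 * t) t := by
      exact ((hasDerivAt_id' t).pow 2).congr_deriv (by simp)
    exact h1.div h2 (by have := ht.1; positivity)
  have hmono : MonotoneOn (fun t : ℝ => F (t • x) / t ^ 2) (Set.Icc 1 s) := by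
    refine monotoneOn_of_deriv_nonneg (convex_Icc 1 s)
      (fun y hy => (hdd y hy).continuousAt.continuousWithinAt)
      (fun y hy => (hdd y (interior_subset hy)).differentiableAt.differentiableWithinAt) ?_
    intro t ht
    have ht' := interior_subset ht
    rw [(hdd t ht').deriv]
    have h3 := H.F3 (t • x)
    rw [inner_smul_right] at h3
    have : 0 ≤ t := by linarith [ht'.1]
    exact div_nonneg (by nlinarith) (by positivity)
  have h := hmono ⟨le_rfl, hs⟩ ⟨hs, le_rfl⟩ hs
  simp only [one_smul, one_pow, div_one] at h
  rw [le_div_iff₀ (by positivity)] at h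
  linarith

theorem phi_zero_le_one (H : NehariHyp F f) (u : E) (t : ℝ) (ht : 0 ≤ t) (ht1 : t ≤ 1) :
    nehariPhi F f u 0 t ≤ 0 := by
  have h1 : nehariPhi F f u 0 1 = 0 := by simp [nehariPhi]
  by_contra! hp
  rcases ht1.eq_or_lt with h | h
  · rw [h] at hp; linarith
  · linarith [H.phi_lt u 0 t 1 ht h hp]

/-- The case `t = 1 / s ≤ 1` on a ray, based at `s u`. -/
theorem ray_back (H : NehariHyp F f) (u : E) (s : ℝ) (hs : 1 ≤ s) :
    F (s • u) - F u ≤ (s ^ 2 - 1) / (2 * s) * ⟪f (s • u), u⟫ := by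
  have hs0 : 0 < s := by linarith
  have h := H.phi_zero_le_one (s • u) s⁻¹ (inv_nonneg.2 hs0.le) (inv_le_one_of_one_le₀ hs)
  rw [nehariPhi, smul_smul, inv_mul_cancel₀ hs0.ne', inner_smul_right] at h
  simp only [one_smul, add_zero, inner_zero_right, mul_zero] at h
  have : (s⁻¹ ^ 2 - 1) / 2 * (s * ⟪f (s • u), u⟫)
      = -((s ^ 2 - 1) / (2 * s) * ⟪f (s • u), u⟫) := by field_simp; ring
  linarith

/-- `F (t u)` lies above its tangent at `t = 1` in the variable `t²`.  For `t > 1` this is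
`nonneg_of_mul_deriv_ge` in the parameter `y = (s² - 1) / (t² - 1)`. -/
theorem phi_zero_nonpos (H : NehariHyp F f) (u : E) (t : ℝ) (ht : 0 ≤ t) :
    nehariPhi F f u 0 t ≤ 0 := by
  rcases le_or_gt t 1 with ht1 | ht1
  · exact H.phi_zero_le_one u t ht ht1
  set k := t ^ 2 - 1 with hk
  have hk0 : 0 < k := by nlinarith
  have key := nonneg_of_mul_deriv_ge
    (fun y => F (√(1 + y * k) • u) - F u - y * (k / 2 * ⟪f u, u⟫))
    (fun y => ⟪f (√(1 + y * k) • u), u⟫ * (k / (2 * √(1 + y * k))) - k / 2 * ⟪f u, u⟫)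
    ?_ (by simp) (by simp; linarith) ?_
  · have hsq : √(1 + 1 * k) = t := by
      rw [hk, show 1 + 1 * (t ^ 2 - 1) = t ^ 2 by ring, Real.sqrt_sq ht]
    simp only [hsq] at key
    simp only [nehariPhi, inner_zero_right, mul_zero, add_zero]
    linarith
  · intro y hy
    have hpos : 0 < 1 + y * k := by nlinarith [hy.1]
    have h1 : HasDerivAt (fun y => √(1 + y * k)) (k / (2 * √(1 + y * k))) y := by
      have := (((hasDerivAt_id' y).mul_const k).const_add 1).sqrt hpos.ne'
      simpa using this
    have h2 := H.hasDerivAt_line u 0 (√(1 + y * k))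
    simp only [add_zero] at h2
    have h3 := (h2.comp y h1).sub_const (F u)
    have h4 := h3.sub ((hasDerivAt_id' y).mul_const (k / 2 * ⟪f u, u⟫))
    exact h4.congr_deriv (by simp)
  · intro y hy _
    have hpos : 1 ≤ 1 + y * k := by nlinarith [hy.1]
    have hs : 1 ≤ √(1 + y * k) := Real.one_le_sqrt.2 hpos
    have h := H.ray_back u _ hs
    rw [Real.sq_sqrt (by linarith)] at h
    have : (1 + y * k - 1) / (2 * √(1 + y * k)) * ⟪f (√(1 + y * k) • u), u⟫
      = y * (⟪f (√(1 + y * k) • u), u⟫ * (k / (2 * √(1 + y * k)))) := by ring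
    linarith

/-- Positivity of `φ` for one `ψ` bounds `F` quadratically on the ray through `u`: the point
`s T u + ψ` is `s` times a point tending to `T u` as `s → ∞`.  Below, `ε = 1 / s`. -/
theorem ray_upper (H : NehariHyp F f) (u ψ : E) (t₀ : ℝ) (ht : 0 ≤ t₀)
    (hp : 0 < nehariPhi F f u ψ t₀) (T : ℝ) (hT : 0 < T) :
    F (T • u) ≤ T ^ 2 / 2 * ⟪f u, u⟫ := by
  have hev : ∀ᶠ ε in 𝓝[>] (0 : ℝ), F (ε • ψ + T • u) ≤
      T ^ 2 / 2 * ⟪f u, u⟫ + ε * (T * ⟪f u, ψ⟫) + ε ^ 2 * (F u - ⟪f u, u⟫ / 2) := by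
    have hm : 0 < min 1 (T / (t₀ + 1)) := by positivity
    filter_upwards [Ioo_mem_nhdsGT hm] with ε hε
    have hε0 := hε.1
    have hε1 : ε < 1 := hε.2.trans_le (min_le_left _ _)
    have hε2 : ε < T / (t₀ + 1) := hε.2.trans_le (min_le_right _ _)
    rw [lt_div_iff₀ (by linarith)] at hε2
    have hlt : t₀ < ε⁻¹ * T := by
      rw [inv_mul_eq_div, lt_div_iff₀ hε0]; nlinarith
    have h1 := H.phi_lt u ψ t₀ _ ht hlt hp
    have h2 := H.sq_mul_le (ε • ψ + T • u) ε⁻¹ (one_le_inv_iff₀.2 ⟨hε0, hε1.le⟩)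
    have h3 : ε⁻¹ • (ε • ψ + T • u) = (ε⁻¹ * T) • u + ψ := by
      rw [smul_add, smul_smul, smul_smul, inv_mul_cancel₀ hε0.ne', one_smul, add_comm]
    rw [h3] at h2
    have h4 : 0 < nehariPhi F f u ψ (ε⁻¹ * T) := hp.trans h1
    rw [nehariPhi] at h4
    have h5 : ε⁻¹ ^ 2 * F (ε • ψ + T • u) ≤
      ((ε⁻¹ * T) ^ 2 - 1) / 2 * ⟪f u, u⟫ + ε⁻¹ * T * ⟪f u, ψ⟫ + F u := by linarith
    have h6 := mul_le_mul_of_nonneg_left h5 (sq_nonneg ε)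
    calc F (ε • ψ + T • u) = ε ^ 2 * (ε⁻¹ ^ 2 * F (ε • ψ + T • u)) := by field_simp
      _ ≤ _ := h6
      _ = _ := by field_simp; ring
  have hcF : Tendsto (fun ε : ℝ => F (ε • ψ + T • u)) (𝓝[>] 0) (𝓝 (F (T • u))) := by
    have := (H.hasDerivAt_line ψ (T • u) 0).continuousAt.tendsto
    simp only [zero_smul, zero_add] at this
    exact this.mono_left nhdsWithin_le_nhds
  have hcR : Tendsto (fun ε : ℝ => T ^ 2 / 2 * ⟪f u, u⟫ + ε * (T * ⟪f u, ψ⟫)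
      + ε ^ 2 * (F u - ⟪f u, u⟫ / 2)) (𝓝[>] 0) (𝓝 (T ^ 2 / 2 * ⟪f u, u⟫)) := by
    have : Continuous (fun ε : ℝ => T ^ 2 / 2 * ⟪f u, u⟫ + ε * (T * ⟪f u, ψ⟫)
      + ε ^ 2 * (F u - ⟪f u, u⟫ / 2)) := by fun_prop
    have h := this.tendsto 0
    simp only [zero_mul, add_zero, ne_eq, OfNat.ofNat_ne_zero, not_false_eq_true, zero_pow] at h
    exact h.mono_left nhdsWithin_le_nhds
  exact le_of_tendsto_of_tendsto hcF hcR hev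

theorem nonpos_of_sq_mul_le (d C : ℝ) (h : ∀ s : ℝ, 1 ≤ s → s ^ 2 * d ≤ C) : d ≤ 0 := by
  by_contra! hd
  have hq : 0 ≤ |C| / d := by positivity
  have h1 := h (1 + |C| / d) (by linarith)
  have h2 : |C| / d * d = |C| := div_mul_cancel₀ _ hd.ne'
  nlinarith [le_abs_self C, mul_nonneg hq hd.le, mul_nonneg (mul_nonneg hq hq) hd.le]

theorem ray_A_le (H : NehariHyp F f) (u ψ : E) (t₀ : ℝ) (ht : 0 ≤ t₀)
    (hp : 0 < nehariPhi F f u ψ t₀) (T : ℝ) (hT : 0 < T) :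
    ⟪f (T • u), u⟫ ≤ T * ⟪f u, u⟫ := by
  have := nonpos_of_sq_mul_le (T * (⟪f (T • u), u⟫ - T * ⟪f u, u⟫))
    (T * ⟪f (T • u), u⟫ - 2 * F (T • u)) (fun s hs => by
      have h1 := H.phi_zero_nonpos (T • u) s (by linarith)
      have h2 := H.ray_upper u ψ t₀ ht hp (s * T) (by positivity)
      rw [nehariPhi, smul_smul, inner_smul_right] at h1
      simp only [add_zero, inner_zero_right, mul_zero] at h1
      nlinarith)
  by_contra! hcon
  nlinarith

theorem ray_eq (H : NehariHyp F f) (u ψ : E) (t₀ : ℝ) (ht : 0 ≤ t₀)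
    (hp : 0 < nehariPhi F f u ψ t₀) (s : ℝ) (hs : 1 ≤ s) :
    F (s • u) = F u + (s ^ 2 - 1) / 2 * ⟪f u, u⟫ := by
  have hs0 : 0 < s := by linarith
  refine le_antisymm ?_ ?_
  · have h1 := H.ray_back u s hs
    have h2 := H.ray_A_le u ψ t₀ ht hp s hs0
    have h3 : 0 ≤ (s ^ 2 - 1) / (2 * s) := div_nonneg (by nlinarith) (by linarith)
    have h4 := mul_le_mul_of_nonneg_left h2 h3
    have h5 : (s ^ 2 - 1) / (2 * s) * (s * ⟪f u, u⟫) = (s ^ 2 - 1) / 2 * ⟪f u, u⟫ := by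
      field_simp
    linarith
  · have h1 := H.phi_zero_nonpos u s hs0.le
    simp only [nehariPhi, add_zero, inner_zero_right, mul_zero] at h1
    linarith

theorem ray_A (H : NehariHyp F f) (u ψ : E) (t₀ : ℝ) (ht : 0 ≤ t₀)
    (hp : 0 < nehariPhi F f u ψ t₀) (s : ℝ) (hs : 1 < s) :
    ⟪f (s • u), u⟫ = s * ⟪f u, u⟫ := by
  have hs0 : 0 < s := by linarith
  refine le_antisymm (H.ray_A_le u ψ t₀ ht hp s hs0) ?_
  have h1 := H.ray_back u s hs.le
  rw [H.ray_eq u ψ t₀ ht hp s hs.le] at h1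
  have h3 : 0 < (s ^ 2 - 1) / (2 * s) := div_pos (by nlinarith) (by linarith)
  have h5 : (s ^ 2 - 1) / (2 * s) * (s * ⟪f u, u⟫) = (s ^ 2 - 1) / 2 * ⟪f u, u⟫ := by
    field_simp
  exact le_of_mul_le_mul_left (by linarith) h3

theorem eventually_pos_of_deriv {k : ℝ → ℝ} {e : ℝ} (hk : HasDerivAt k e 0) (h0 : k 0 = 0)
    (he : 0 < e) : ∀ᶠ δ in 𝓝[>] (0 : ℝ), 0 < k δ := by
  have hs := (hasDerivAt_iff_tendsto_slope_zero.1 hk).mono_left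
    (nhdsGT_le_nhdsNE 0)
  filter_upwards [hs.eventually (lt_mem_nhds he), self_mem_nhdsWithin] with δ h1 (h2 : 0 < δ)
  rw [zero_add, h0, sub_zero, smul_eq_mul] at h1
  exact pos_of_mul_pos_right h1 (inv_nonneg.2 h2.le)

/-- Base `φ` at `s u` with a small perturbation `δ η`.  To first order in `δ` its value at `1 / s`
is `δ (⟪f (s u), η⟫ / s - ⟪f u, η⟫)` while its value at `1` is `0`, so by `phi_lt` the former
cannot be positive. -/
theorem ray_grad_le (H : NehariHyp F f) (u ψ : E) (t₀ : ℝ) (ht : 0 ≤ t₀)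
    (hp : 0 < nehariPhi F f u ψ t₀) (s : ℝ) (hs : 1 < s) (η : E) :
    ⟪f (s • u), η⟫ ≤ s * ⟪f u, η⟫ := by
  by_contra! hcon
  have hs0 : 0 < s := by linarith
  have he : 0 < s⁻¹ * ⟪f (s • u), η⟫ - ⟪f u, η⟫ := by
    rw [inv_mul_eq_div, sub_pos, lt_div_iff₀ hs0]; linarith
  have hv1 : ∀ δ : ℝ, nehariPhi F f (s • u) (δ • η) s⁻¹
      = δ * (s⁻¹ * ⟪f (s • u), η⟫) + F u - F (δ • η + u) := by
    intro δ
    rw [nehariPhi, smul_smul, inv_mul_cancel₀ hs0.ne', one_smul, inner_smul_right,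
      inner_smul_right, H.ray_A u ψ t₀ ht hp s hs, H.ray_eq u ψ t₀ ht hp s hs.le, add_comm u]
    field_simp
    ring
  have hv2 : ∀ δ : ℝ, nehariPhi F f (s • u) (δ • η) 1
      = δ * ⟪f (s • u), η⟫ + F (s • u) - F (δ • η + s • u) := by
    intro δ
    rw [nehariPhi, one_smul, inner_smul_right, inner_smul_right, add_comm (s • u)]
    ring
  have hd1 : HasDerivAt (fun δ : ℝ => nehariPhi F f (s • u) (δ • η) s⁻¹)
      (s⁻¹ * ⟪f (s • u), η⟫ - ⟪f u, η⟫) 0 := by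
    simp only [hv1]
    have := (((hasDerivAt_id' (0 : ℝ)).mul_const (s⁻¹ * ⟪f (s • u), η⟫)).add_const (F u)).sub
      (H.hasDerivAt_line η u 0)
    exact this.congr_deriv (by simp)
  have hd2 : HasDerivAt (fun δ : ℝ => nehariPhi F f (s • u) (δ • η) 1) 0 0 := by
    simp only [hv2]
    have := (((hasDerivAt_id' (0 : ℝ)).mul_const ⟪f (s • u), η⟫).add_const (F (s • u))).sub
      (H.hasDerivAt_line η (s • u) 0)
    exact this.congr_deriv (by simp)
  have hp1 := eventually_pos_of_deriv hd1 (by rw [hv1]; simp) he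
  have hp2 := eventually_pos_of_deriv (hd1.sub hd2) (by
    rw [Pi.sub_apply, hv1, hv2]; simp) (by simpa using he)
  obtain ⟨δ, h1, h2⟩ := (hp1.and hp2).exists
  have h3 := H.phi_lt (s • u) (δ • η) s⁻¹ 1 (inv_nonneg.2 hs0.le) (inv_lt_one_of_one_lt₀ hs) h1
  simp only [Pi.sub_apply] at h2
  linarith

theorem ray_grad (H : NehariHyp F f) (u ψ : E) (t₀ : ℝ) (ht : 0 ≤ t₀)
    (hp : 0 < nehariPhi F f u ψ t₀) (s : ℝ) (hs : 1 ≤ s) (η : E) :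
    ⟪f (s • u), η⟫ = s * ⟪f u, η⟫ := by
  rcases hs.eq_or_lt with h | h
  · simp [← h]
  · refine le_antisymm (H.ray_grad_le u ψ t₀ ht hp s h η) ?_
    have := H.ray_grad_le u ψ t₀ ht hp s h (-η)
    simp only [inner_neg_right] at this
    linarith

/-! ### Exchanging the roles of the two points -/

/-- The inequality for the base point `v` and `t v + ψ = w`, at the maximising parameter
`t = ⟪f v, w⟫ / ⟪f v, v⟫`, holds if the derivative of `φ` there is nonpositive. -/
theorem pair_le (H : NehariHyp F f) (v w : E) (hb : 0 < ⟪f v, w⟫) (hB : 0 < ⟪f v, v⟫)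
    (hD : ⟪f v, w⟫ ≤ ⟪f w, v⟫) :
    F v - F w - ⟪f v, v⟫ / 2 + ⟪f v, w⟫ ^ 2 / (2 * ⟪f v, v⟫) ≤ 0 := by
  by_contra! hcon
  set t := ⟪f v, w⟫ / ⟪f v, v⟫ with ht
  have hw : t • v + (w - t • v) = w := by abel
  have hp : 0 < nehariPhi F f v (w - t • v) t := by
    rw [phi_eq, hw]
    have : -(t ^ 2 + 1) / 2 * ⟪f v, v⟫ + t * ⟪f v, w⟫
      = - ⟪f v, v⟫ / 2 + ⟪f v, w⟫ ^ 2 / (2 * ⟪f v, v⟫) := by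
      rw [ht]; field_simp; ring
    linarith
  have h := H.deriv_pos v (w - t • v) t (by positivity) hp
  rw [hw] at h
  linarith

/-- The differential inequality `h ≤ y h'` for `h(y) = F (x u + y ψ) - F u - (x² - 1) A / 2` at a
point `v = x u + η`, `η = y ψ`, where `h` is negative. -/
theorem slice_ineq (H : NehariHyp F f) (u η : E) (x : ℝ) (hx : 1 ≤ x) (hη : ⟪f u, η⟫ = 0)
    (hp : 0 < nehariPhi F f u η x) :
    F (x • u + η) - F u - (x ^ 2 - 1) / 2 * ⟪f u, u⟫ ≤ ⟪f (x • u + η), η⟫ := by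
  have hx0 : 0 ≤ x := by linarith
  have hD := H.deriv_pos u η x hx0 hp
  have hA := H.A_pos_of_phi_pos u η x hx0 hp
  have hray := H.ray_eq u η x hx0 hp
  have hgrad := H.ray_grad u η x hx0 hp
  have hneg := hp
  rw [nehariPhi, hη] at hneg
  set v := x • u + η with hv
  have hB : ⟪f v, v⟫ = x * ⟪f v, u⟫ + ⟪f v, η⟫ := by
    conv_lhs => rw [hv, inner_add_right, inner_smul_right, ← hv]
  have hB0 := H.A_nonneg v
  rcases le_or_gt ⟪f v, u⟫ 0 with hq | hq
  · nlinarith [mul_nonneg hx0 (neg_nonneg.2 hq)]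
  have hB1 : 0 < ⟪f v, v⟫ := by
    rcases hB0.eq_or_lt with h | h
    · rw [H.f_eq_zero v h.symm] at hq; simp at hq
    · exact h
  have hpair : ∀ s : ℝ, 1 ≤ s → F v - (F u + (s ^ 2 - 1) / 2 * ⟪f u, u⟫) - ⟪f v, v⟫ / 2
      + (s * ⟪f v, u⟫) ^ 2 / (2 * ⟪f v, v⟫) ≤ 0 := by
    intro s hs
    have hs0 : 0 < s := by linarith
    have h := H.pair_le v (s • u) (by rw [inner_smul_right]; positivity) hB1 (by
      rw [inner_smul_right, hgrad s hs]
      exact mul_le_mul_of_nonneg_left (by linarith) hs0.le)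
    rwa [hray s hs, inner_smul_right] at h
  generalize ⟪f v, u⟫ = p at *
  generalize ⟪f v, η⟫ = r at *
  generalize ⟪f v, v⟫ = B at *
  generalize ⟪f u, u⟫ = A at *
  -- The limit `s → ∞`.
  have hpB : p ^ 2 ≤ A * B := by
    have := nonpos_of_sq_mul_le (p ^ 2 - A * B) (B * (2 * F u - A + B - 2 * F v)) (fun s hs => by
      have h := hpair s hs
      have h2 : (s * p) ^ 2 / (2 * B) * (2 * B) = (s * p) ^ 2 := by field_simp
      nlinarith)
    linarith
  have h1 := hpair 1 le_rfl
  have h2 : (1 * p) ^ 2 / (2 * B) * (2 * B) = p ^ 2 := by field_simp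
  have h3 : 0 ≤ (B - x * p) ^ 2 + (x ^ 2 - 1) * (A * B - p ^ 2) :=
    add_nonneg (sq_nonneg _) (mul_nonneg (by nlinarith) (by linarith))
  by_contra! hcon
  have hr : r = B - x * p := by linarith
  subst hr
  have h4 := mul_lt_mul_of_pos_right hcon (show 0 < 2 * B by linarith)
  have h5 := mul_le_mul_of_nonneg_right h1 (show 0 ≤ 2 * B by linarith)
  nlinarith

theorem phi_nonpos (H : NehariHyp F f) (u ψ : E) (t : ℝ) (ht : 0 ≤ t) :
    nehariPhi F f u ψ t ≤ 0 := by
  by_contra! hp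
  have hA := H.A_pos_of_phi_pos u ψ t ht hp
  have hb := H.inner_pos_of_phi_pos u ψ t ht hp
  -- Replace `ψ` by its projection `η` along `u` to the orthogonal complement of `f u`; this moves
  -- the parameter of the point `t u + ψ` to the maximiser `x₀` of the quadratic part.
  obtain ⟨η, x₀, hx₀, hη, hp₀⟩ : ∃ (η : E) (x₀ : ℝ), 0 ≤ x₀ ∧ ⟪f u, η⟫ = 0 ∧
      0 < nehariPhi F f u η x₀ := by
    set x₀ := ⟪f u, t • u + ψ⟫ / ⟪f u, u⟫ with hx
    have hxA : x₀ * ⟪f u, u⟫ = ⟪f u, t • u + ψ⟫ := div_mul_cancel₀ _ hA.ne'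
    refine ⟨t • u + ψ - x₀ • u, x₀, by positivity, ?_, ?_⟩
    · rw [inner_sub_right, inner_smul_right, hxA, sub_self]
    · rw [phi_eq] at hp ⊢
      rw [show x₀ • u + (t • u + ψ - x₀ • u) = t • u + ψ by abel, ← hxA]
      rw [← hxA] at hp
      nlinarith [mul_nonneg (sq_nonneg (x₀ - t)) hA.le]
  obtain ⟨x, hx, hpx⟩ : ∃ x : ℝ, 1 ≤ x ∧ 0 < nehariPhi F f u η x :=
    ⟨x₀ + 1, by linarith, hp₀.trans (H.phi_lt u η x₀ _ hx₀ (by linarith) hp₀)⟩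
  have hx0 : 0 ≤ x := by linarith
  have key := nonneg_of_mul_deriv_ge
    (fun y => F (y • η + x • u) - F u - (x ^ 2 - 1) / 2 * ⟪f u, u⟫)
    (fun y => ⟪f (y • η + x • u), η⟫)
    (fun y _ => ((H.hasDerivAt_line η (x • u) y).sub_const _).sub_const _)
    (by simp [H.ray_eq u η x hx0 hpx x hx])
    (by simp [H.ray_grad u η x hx0 hpx x hx, hη])
    (fun y _ hy => by
      have h := H.slice_ineq u (y • η) x hx (by rw [inner_smul_right, hη, mul_zero]) (by
        rw [nehariPhi, inner_smul_right, hη, add_comm (x • u)]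
        linarith)
      rw [inner_smul_right, add_comm (x • u)] at h
      exact h)
  rw [nehariPhi, hη, add_comm (x • u)] at hpx
  simp only [one_smul] at key
  linarith

end NehariHyp

/-- The pointwise inequality underlying Proposition `Propuv_N`: if `F : ℝ³ → ℝ` is
differentiable with gradient `f`, `F ≥ 0`, and `F` satisfies
(F3): `⟨f(u),u⟩ ≥ 2F(u)` for all `u`, and
(F4): `F(u) - F(v) ≤ (⟨f(u),u⟩² - ⟨f(u),v⟩²)/(2⟨f(u),u⟩)` whenever
`⟨f(u),v⟩ = ⟨f(v),u⟩ > 0`,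
then `⟨f(u), ((t²-1)/2)u + tψ⟩ + F(u) - F(tu + ψ) ≤ 0` for all `u, ψ ∈ ℝ³`, `t ≥ 0`. -/
theorem pointwise_nehari_inequality
    (F : EuclideanSpace ℝ (Fin 3) → ℝ)
    (f : EuclideanSpace ℝ (Fin 3) → EuclideanSpace ℝ (Fin 3))
    (hgrad : ∀ u, HasGradientAt F (f u) u)
    (hF0 : ∀ u, 0 ≤ F u)
    (hF3 : ∀ u, 2 * F u ≤ ⟪f u, u⟫)
    (hF4 : ∀ u v, ⟪f u, v⟫ = ⟪f v, u⟫ → 0 < ⟪f u, v⟫ →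
      F u - F v ≤ (⟪f u, u⟫ ^ 2 - ⟪f u, v⟫ ^ 2) / (2 * ⟪f u, u⟫))
    (u ψ : EuclideanSpace ℝ (Fin 3)) (t : ℝ) (ht : 0 ≤ t) :
    ⟪f u, ((t ^ 2 - 1) / 2) • u + t • ψ⟫ + F u - F (t • u + ψ) ≤ 0 := by
  have H : NehariHyp F f := ⟨hgrad, hF0, hF3, hF4⟩
  have h := H.phi_nonpos u ψ t ht
  rw [nehariPhi] at h
  rwa [inner_add_right, inner_smul_right, inner_smul_right]
end
end

section
/- Let G : ℝ → ℝ be differentiable with continuous derivative g := G', G(0) = 0, and suppose t ↦ g(t)/t is non-decreasing on (0,∞). Let M be an invertible real 3×3 matrix and set F(u) := G(|Mu|) for u ∈ ℝ³, and f(u) := (g(|Mu|)/|Mu|) MᵀM u if Mu ≠ 0, f(u) := 0 if Mu = 0. Then F satisfies (F3): ⟨f(u), u⟩ ≥ 2F(u) for every u ∈ ℝ³. -/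
open MeasureTheory Filter Real Set Matrix
open scoped RealInnerProductSpace ENNReal Topology

noncomputable section
open scoped Classical

/-!
Put `r = |Mu|`. Since `⟨MᵀM u, u⟩ = |Mu|²`, for `r > 0` the claim is the one-variable
inequality `2 G(r) ≤ g(r) r`. With `c = g(r)/r`, monotonicity of `g(t)/t` gives `g(t) ≤ c t`
on `(0, r)`, so `t ↦ c t²/2 - G(t)` is non-decreasing on `[0, r]`; comparing its values at
`0` and `r` gives the inequality.
-/

theorem two_mul_le_of_monotoneOn_div {G g : ℝ → ℝ} (hG : ∀ t, HasDerivAt G (g t) t)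
    (hG0 : G 0 = 0) (hmono : MonotoneOn (fun t => g t / t) (Set.Ioi (0:ℝ)))
    {r : ℝ} (hr : 0 < r) : 2 * G r ≤ g r * r := by
  have hd : ∀ t, HasDerivAt (fun t => g r / r * t ^ 2 / 2 - G t) (g r / r * t - g t) t := by
    intro t
    refine HasDerivAt.sub ?_ (hG t)
    have h := ((hasDerivAt_pow 2 t).const_mul (g r / r)).div_const 2
    refine h.congr_deriv ?_
    norm_num
    ring
  have hm : MonotoneOn (fun t => g r / r * t ^ 2 / 2 - G t) (Set.Icc 0 r) := by
    refine monotoneOn_of_deriv_nonneg (convex_Icc 0 r)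
      (fun t _ => (hd t).continuousAt.continuousWithinAt)
      (fun t _ => (hd t).differentiableAt.differentiableWithinAt) ?_
    intro t ht
    rw [interior_Icc] at ht
    rw [(hd t).deriv, sub_nonneg]
    exact (div_le_iff₀ ht.1).1 (hmono ht.1 hr ht.2.le)
  have h := hm (Set.left_mem_Icc.2 hr.le) (Set.right_mem_Icc.2 hr.le) hr.le
  have e : g r / r * r ^ 2 = g r * r := by field_simp
  simp only [e, hG0] at h
  linarith

theorem inner_toEuclideanLin_transpose_mul_self (M : Matrix (Fin 3) (Fin 3) ℝ)
    (u : EuclideanSpace ℝ (Fin 3)) :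
    ⟪Matrix.toEuclideanLin (Mᵀ * M) u, u⟫ = ‖Matrix.toEuclideanLin M u‖ ^ 2 := by
  have h : Matrix.toEuclideanLin (Mᵀ * M) u
      = Matrix.toEuclideanLin Mᴴ (Matrix.toEuclideanLin M u) := by
    ext i
    simp [Matrix.toEuclideanLin, Matrix.mulVec_mulVec]
  rw [h, Matrix.toEuclideanLin_conjTranspose_eq_adjoint, LinearMap.adjoint_inner_left,
    real_inner_self_eq_norm_sq]

/-- If `G : ℝ → ℝ` is differentiable with continuous derivative `g`, `G(0) = 0`,
`t ↦ g(t)/t` is non-decreasing on `(0,∞)`, `M` is an invertible real `3×3` matrix,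
`F(u) := G(|Mu|)` and `f(u) := (g(|Mu|)/|Mu|) MᵀM u` for `Mu ≠ 0`, `f(u) := 0` for
`Mu = 0`, then `F` satisfies (F3): `⟨f(u),u⟩ ≥ 2F(u)` for every `u ∈ ℝ³`. -/
theorem matrix_composed_nonlinearity_F3
    (G g : ℝ → ℝ) (hg : g = deriv G)
    (hdiff : Differentiable ℝ G) (hcont : Continuous g) (hG0 : G 0 = 0)
    (hmono : MonotoneOn (fun t => g t / t) (Set.Ioi (0:ℝ)))
    (M : Matrix (Fin 3) (Fin 3) ℝ) (hM : IsUnit M)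
    (F : EuclideanSpace ℝ (Fin 3) → ℝ)
    (f : EuclideanSpace ℝ (Fin 3) → EuclideanSpace ℝ (Fin 3))
    (hF : ∀ u, F u = G ‖Matrix.toEuclideanLin M u‖)
    (hf : ∀ u, f u = if Matrix.toEuclideanLin M u = 0 then 0 else
      (g ‖Matrix.toEuclideanLin M u‖ / ‖Matrix.toEuclideanLin M u‖) •
        Matrix.toEuclideanLin (Mᵀ * M) u) :
    ∀ u, 2 * F u ≤ ⟪f u, u⟫ := by
  intro u
  rw [hF, hf]
  split_ifs with h
  · simp [h, hG0]
  · have hr : 0 < ‖Matrix.toEuclideanLin M u‖ := norm_pos_iff.2 h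
    rw [real_inner_smul_left, inner_toEuclideanLin_transpose_mul_self]
    have hG : ∀ t, HasDerivAt G (g t) t := fun t => hg ▸ (hdiff t).hasDerivAt
    refine (two_mul_le_of_monotoneOn_div hG hG0 hmono hr).trans_eq ?_
    field_simp
end
end

section
/- Let a := 2⁻⁴ ln 2 and define φ : [0,∞) → ℝ by φ(s) := s⁵/(1 − ln s) for 0 < s ≤ 1, φ(s) := s for 1 ≤ s ≤ 2, φ(s) := a s⁵/ln s for s ≥ 2, φ(0) := 0, and set Φ(t) := ∫₀^{|t|} φ(s) ds. Then lim_{t→0⁺} Φ(t)/t⁶ = 0 while lim_{t→0⁺} Φ(t)/t^q = ∞ for every q > 6, and lim_{t→∞} Φ(t)/t⁶ = 0 while lim_{t→∞} Φ(t)/t^p = ∞ for every p < 6. -/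
/-!
The function `φ` satisfies `0 ≤ φ s ≤ s ^ 5` on `[0, ∞)`, and it is `s ^ 5` up to a logarithmic
factor near `0` and near `∞`; hence `Φ t` is `t ^ 6` up to such a factor.

* Upper bounds: near `0`, `φ ≤ t ^ 5 / (1 - log t)` on `(0, t]`. Near `∞` the interval `(0, t]` is
  split at `√t`: below it `φ s ≤ s ^ 5 ≤ (√t) ^ 5`, which contributes only `t ^ 3`, and above it
  `log s ≥ log t / 2`.
* Lower bounds: only `(t / 2, t]` is kept, and the logarithm is absorbed in an arbitrarily small
  power through `log x ≤ x ^ ε / ε`.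
-/

open MeasureTheory Filter Real Set
open scoped RealInnerProductSpace ENNReal Topology

noncomputable section

/-- Lower bound for `∫₀ᵗ f` obtained by discarding the part below `u`. -/
lemma le_integral_of_le_tail {f : ℝ → ℝ} {u t m : ℝ} (hu : 0 ≤ u) (hut : u ≤ t)
    (hint : ∀ x y, 0 ≤ x → x ≤ y → IntervalIntegrable f volume x y)
    (h0 : ∀ s, 0 < s → 0 ≤ f s) (hm : ∀ s, u < s → s ≤ t → m ≤ f s) :
    (t - u) * m ≤ ∫ s in (0:ℝ)..t, f s := by
  have h1 : 0 ≤ ∫ s in (0:ℝ)..u, f s := by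
    rw [intervalIntegral.integral_of_le hu]
    exact setIntegral_nonneg measurableSet_Ioc fun s hs => h0 s hs.1
  have h2 : ∫ _ in u..t, m ≤ ∫ s in u..t, f s :=
    intervalIntegral.integral_mono_on_of_le_Ioo hut (by simp) (hint u t hu hut)
      fun s hs => hm s hs.1 hs.2.le
  rw [← intervalIntegral.integral_add_adjacent_intervals (hint 0 u le_rfl hu) (hint u t hu hut)]
  simp only [intervalIntegral.integral_const, smul_eq_mul] at h2
  linarith

lemma integral_le_of_le_split {f : ℝ → ℝ} {u t M N : ℝ} (hu : 0 ≤ u) (hut : u ≤ t)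
    (hint : ∀ x y, 0 ≤ x → x ≤ y → IntervalIntegrable f volume x y)
    (hM : ∀ s, 0 < s → s ≤ u → f s ≤ M) (hN : ∀ s, u < s → s ≤ t → f s ≤ N) :
    ∫ s in (0:ℝ)..t, f s ≤ u * M + (t - u) * N := by
  have h1 : ∫ s in (0:ℝ)..u, f s ≤ ∫ _ in (0:ℝ)..u, M :=
    intervalIntegral.integral_mono_on_of_le_Ioo hu (hint 0 u le_rfl hu) (by simp)
      fun s hs => hM s hs.1 hs.2.le
  have h2 : ∫ s in u..t, f s ≤ ∫ _ in u..t, N :=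
    intervalIntegral.integral_mono_on_of_le_Ioo hut (hint u t hu hut) (by simp)
      fun s hs => hN s hs.1 hs.2.le
  rw [← intervalIntegral.integral_add_adjacent_intervals (hint 0 u le_rfl hu) (hint u t hu hut)]
  simp only [intervalIntegral.integral_const, smul_eq_mul] at h1 h2
  linarith

/-- The example `F(x,u) = Γ(x)Φ(|u|)` with `Φ' = φ` as below: `Φ(t)/t⁶ → 0` but
`Φ(t)/t^q → ∞` for every `q > 6` as `t → 0⁺`, and `Φ(t)/t⁶ → 0` but `Φ(t)/t^p → ∞`
for every `p < 6` as `t → ∞`.  Here `a = 2⁻⁴ ln 2`,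
`φ(s) = s⁵/(1 - ln s)` for `0 < s ≤ 1`, `φ(s) = s` for `1 ≤ s ≤ 2`,
`φ(s) = a s⁵/ln s` for `s ≥ 2`, `φ(0) = 0`, and `Φ(t) = ∫₀^{|t|} φ(s) ds`. -/
theorem log_perturbed_critical_example (a : ℝ) (ha : a = Real.log 2 / 2 ^ 4)
    (φ Φ : ℝ → ℝ)
    (hφ : ∀ s, φ s = if s = 0 then 0
      else if s ≤ 1 then s ^ 5 / (1 - Real.log s)
      else if s ≤ 2 then s
      else a * s ^ 5 / Real.log s)
    (hΦ : ∀ t, Φ t = ∫ s in (0:ℝ)..|t|, φ s) :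
    Tendsto (fun t => Φ t / t ^ 6) (𝓝[>] (0:ℝ)) (𝓝 0) ∧
    (∀ q : ℝ, 6 < q → Tendsto (fun t => Φ t / t ^ q) (𝓝[>] (0:ℝ)) atTop) ∧
    Tendsto (fun t => Φ t / t ^ 6) atTop (𝓝 0) ∧
    (∀ p : ℝ, p < 6 → Tendsto (fun t => Φ t / t ^ p) atTop atTop) := by
  have hlog2 : 0 < Real.log 2 := Real.log_pos (by norm_num)
  have ha0 : 0 < a := by rw [ha]; positivity
  have hsmall : ∀ s, 0 < s → s ≤ 1 → φ s = s ^ 5 / (1 - Real.log s) := fun s h0 h1 => by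
    rw [hφ, if_neg h0.ne', if_pos h1]
  have hmid : ∀ s, 1 < s → s ≤ 2 → φ s = s := fun s h0 h1 => by
    rw [hφ, if_neg (by linarith), if_neg (by linarith), if_pos h1]
  have hlarge : ∀ s, 2 < s → φ s = a * s ^ 5 / Real.log s := fun s h => by
    rw [hφ, if_neg (by linarith), if_neg (by linarith), if_neg (by linarith)]
  have hbd : ∀ s, 0 < s → 0 ≤ φ s ∧ φ s ≤ s ^ 5 := by
    intro s hs
    have hs5 : 0 < s ^ 5 := by positivity
    rcases le_or_gt s 1 with h1 | h1
    · have hl : Real.log s ≤ 0 := Real.log_nonpos hs.le h1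
      rw [hsmall s hs h1]
      exact ⟨div_nonneg hs5.le (by linarith), div_le_self hs5.le (by linarith)⟩
    rcases le_or_gt s 2 with h2 | h2
    · rw [hmid s h1 h2]
      exact ⟨hs.le, le_self_pow₀ h1.le (by norm_num)⟩
    · have hl : Real.log 2 ≤ Real.log s := Real.log_le_log (by norm_num) h2.le
      have hl0 : 0 < Real.log s := by linarith
      rw [hlarge s h2]
      refine ⟨by positivity, ?_⟩
      rw [div_le_iff₀ hl0, mul_comm a]
      have : a ≤ Real.log s := by rw [ha]; linarith
      gcongr
  have hmeas : Measurable φ := by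
    rw [show φ = _ from funext hφ]
    refine Measurable.ite (measurableSet_eq_fun measurable_id measurable_const)
      measurable_const (Measurable.ite measurableSet_Iic ?_
      (Measurable.ite measurableSet_Iic measurable_id ?_))
    · fun_prop
    · fun_prop
  have hint : ∀ x y, 0 ≤ x → x ≤ y → IntervalIntegrable φ volume x y := by
    intro x y hx hxy
    have hg : IntervalIntegrable (fun s : ℝ => s ^ 5) volume x y :=
      (continuous_pow 5).intervalIntegrable x y
    refine hg.mono_fun hmeas.aestronglyMeasurable ?_
    filter_upwards [ae_restrict_mem measurableSet_uIoc] with s hs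
    rw [uIoc_of_le hxy] at hs
    have hs0 : 0 < s := lt_of_le_of_lt hx hs.1
    rw [Real.norm_of_nonneg (hbd s hs0).1, Real.norm_of_nonneg (by positivity)]
    exact (hbd s hs0).2
  have hΦ' : ∀ t, 0 < t → Φ t = ∫ s in (0:ℝ)..t, φ s := fun t ht => by
    rw [hΦ, abs_of_pos ht]
  have hnonneg : ∀ t, 0 < t → 0 ≤ Φ t := fun t ht => by
    have := le_integral_of_le_tail (m := 0) ht.le le_rfl hint (fun s hs => (hbd s hs).1)
      (fun s hs _ => (hbd s (ht.trans hs)).1)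
    rw [hΦ' t ht]
    linarith
  refine ⟨?_, ?_, ?_, ?_⟩
  · have hlim : Tendsto (fun t : ℝ => (1 - Real.log t)⁻¹) (𝓝[>] (0:ℝ)) (𝓝 0) := by
      refine tendsto_inv_atTop_zero.comp ?_
      simp only [sub_eq_add_neg]
      exact tendsto_atTop_add_const_left _ _
        (tendsto_neg_atBot_atTop.comp Real.tendsto_log_nhdsGT_zero)
    refine squeeze_zero' ?_ ?_ hlim
    · filter_upwards [self_mem_nhdsWithin] with t ht
      exact div_nonneg (hnonneg t ht) (pow_nonneg (le_of_lt ht) _)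
    · filter_upwards [Ioo_mem_nhdsGT (zero_lt_one (α := ℝ))] with t ht
      have ht0 : 0 < t := ht.1
      have hl : Real.log t ≤ 0 := Real.log_nonpos ht0.le ht.2.le
      have hl1 : 0 < 1 - Real.log t := by linarith
      have := integral_le_of_le_split (f := φ) (M := 0) (N := t ^ 5 / (1 - Real.log t))
        le_rfl ht0.le hint (fun s h1 h2 => absurd h1 (not_lt.2 h2)) (fun s h1 h2 => by
          rw [hsmall s h1 (h2.trans ht.2.le)]
          have := Real.log_le_log h1 h2
          gcongr)
      rw [hΦ' t ht0, div_le_iff₀ (by positivity)]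
      calc _ ≤ _ := this
        _ = _ := by field_simp; ring
  · intro q hq
    obtain ⟨ε, hε, rfl⟩ : ∃ ε : ℝ, 0 < ε ∧ q = 6 + 2 * ε := ⟨(q - 6) / 2, by linarith, by ring⟩
    -- `1 - log (t / 2) = log (2e / t) ≤ (2e / t) ^ ε / ε`, which leaves `t ^ (-ε)`.
    have hlim : Tendsto (fun t : ℝ => (ε / (64 * (2 * Real.exp 1) ^ ε)) * t ^ (-ε))
        (𝓝[>] (0:ℝ)) atTop :=
      (tendsto_rpow_neg_nhdsGT_zero (neg_neg_of_pos hε)).const_mul_atTop (by positivity)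
    refine tendsto_atTop_mono' _ ?_ hlim
    filter_upwards [Ioo_mem_nhdsGT (zero_lt_one (α := ℝ))] with t ht
    have ht0 : 0 < t := ht.1
    have hl : Real.log (t / 2) ≤ 0 := Real.log_nonpos (by positivity) (by linarith [ht.2])
    have hl1 : 0 < 1 - Real.log (t / 2) := by linarith
    have hlow := le_integral_of_le_tail (f := φ) (u := t / 2) (t := t)
      (m := (t / 2) ^ 5 / (1 - Real.log (t / 2))) (by positivity) (by linarith) hint
      (fun s hs => (hbd s hs).1) (fun s h1 h2 => by
        have hs0 : 0 < s := by linarith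
        rw [hsmall s hs0 (h2.trans ht.2.le)]
        have := Real.log_le_log (by positivity) h1.le
        have := Real.log_nonpos hs0.le (h2.trans ht.2.le)
        have : 0 < 1 - Real.log s := by linarith
        gcongr)
    have hlog : 1 - Real.log (t / 2) ≤ (2 * Real.exp 1) ^ ε * t ^ (-ε) / ε := by
      have h := Real.log_le_rpow_div (x := 2 * Real.exp 1 / t) (by positivity) hε
      rw [Real.div_rpow (by positivity) ht0.le, Real.log_div (by positivity) ht0.ne',
        Real.log_mul (by norm_num) (by positivity), Real.log_exp] at h
      rw [Real.log_div ht0.ne' (by norm_num), Real.rpow_neg ht0.le, ← div_eq_mul_inv]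
      linarith
    rw [hΦ' t ht0, le_div_iff₀ (by positivity)]
    refine le_trans ?_ hlow
    have hpow : t ^ (6 + 2 * ε) = t ^ 6 * (t ^ ε * t ^ ε) := by
      rw [two_mul, Real.rpow_add ht0, Real.rpow_add ht0]
      norm_cast
    rw [Real.rpow_neg ht0.le] at hlog ⊢
    have hT : 0 < t ^ ε := by positivity
    have hC : 0 < (2 * Real.exp 1) ^ ε := by positivity
    rw [hpow]
    calc _ = (t - t / 2) * ((t / 2) ^ 5 / ((2 * Real.exp 1) ^ ε * (t ^ ε)⁻¹ / ε)) := by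
          field_simp; norm_num
      _ ≤ _ := by
          have : 0 ≤ t - t / 2 := by linarith
          gcongr
  · have hlim : Tendsto (fun t : ℝ => (t ^ 3)⁻¹ + 2 * a * (Real.log t)⁻¹) atTop (𝓝 0) := by
      have h1 : Tendsto (fun t : ℝ => (t ^ 3)⁻¹) atTop (𝓝 0) :=
        tendsto_inv_atTop_zero.comp (tendsto_pow_atTop (by norm_num))
      have h2 : Tendsto (fun t : ℝ => (Real.log t)⁻¹) atTop (𝓝 0) :=
        tendsto_inv_atTop_zero.comp Real.tendsto_log_atTop
      simpa using h1.add (h2.const_mul (2 * a))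
    refine squeeze_zero' ?_ ?_ hlim
    · filter_upwards [eventually_gt_atTop 0] with t ht
      exact div_nonneg (hnonneg t ht) (by positivity)
    · filter_upwards [eventually_ge_atTop 4] with t ht
      have ht0 : 0 < t := by linarith
      have hr2 : 2 ≤ √t := Real.le_sqrt_of_sq_le (by linarith)
      have hrr : √t * √t = t := Real.mul_self_sqrt ht0.le
      have hrt : √t ≤ t := by nlinarith
      have hlr : Real.log √t = Real.log t / 2 := Real.log_sqrt ht0.le
      have hl0 : 0 < Real.log t := Real.log_pos (by linarith)
      have := integral_le_of_le_split (f := φ) (M := √t ^ 5) (N := a * t ^ 5 / (Real.log t / 2))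
        (by positivity) hrt hint
        (fun s h1 h2 => (hbd s h1).2.trans (by gcongr))
        (fun s h1 h2 => by
          have hs0 : 0 < s := by linarith
          rw [hlarge s (by linarith)]
          have := Real.log_le_log (by positivity) h1.le
          rw [hlr] at this
          gcongr)
      rw [hΦ' t ht0, div_le_iff₀ (by positivity)]
      have hN : 0 ≤ a * t ^ 5 / (Real.log t / 2) := by positivity
      calc _ ≤ _ := this
        _ ≤ √t * √t ^ 5 + t * (a * t ^ 5 / (Real.log t / 2)) := by
          gcongr
          linarith [Real.sqrt_nonneg t]
        _ = (√t * √t) ^ 3 + t * (a * t ^ 5 / (Real.log t / 2)) := by ring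
        _ = _ := by rw [hrr]; field_simp
  · intro p hp
    obtain ⟨ε, hε, rfl⟩ : ∃ ε : ℝ, 0 < ε ∧ p = 6 - 2 * ε := ⟨(6 - p) / 2, by linarith, by ring⟩
    have hlim : Tendsto (fun t : ℝ => (a * ε / 64) * t ^ ε) atTop atTop :=
      (tendsto_rpow_atTop hε).const_mul_atTop (by positivity)
    refine tendsto_atTop_mono' _ ?_ hlim
    filter_upwards [eventually_ge_atTop 4] with t ht
    have ht0 : 0 < t := by linarith
    have hl0 : 0 < Real.log t := Real.log_pos (by linarith)
    have hlow := le_integral_of_le_tail (f := φ) (u := t / 2) (t := t)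
      (m := a * (t / 2) ^ 5 / Real.log t) (by positivity) (by linarith) hint
      (fun s hs => (hbd s hs).1) (fun s h1 h2 => by
        have hs0 : 0 < s := by linarith
        rw [hlarge s (by linarith)]
        have := Real.log_le_log hs0 h2
        have : 0 < Real.log s := Real.log_pos (by linarith)
        gcongr)
    have hlog := Real.log_le_rpow_div ht0.le hε
    rw [hΦ' t ht0, le_div_iff₀ (by positivity)]
    refine le_trans ?_ hlow
    have hpow : t ^ (6 - 2 * ε) = t ^ 6 / (t ^ ε * t ^ ε) := by
      rw [two_mul, Real.rpow_sub ht0, Real.rpow_add ht0]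
      norm_cast
    have hT : 0 < t ^ ε := by positivity
    rw [hpow]
    calc _ = (t - t / 2) * (a * (t / 2) ^ 5 / (t ^ ε / ε)) := by
          field_simp; norm_num
      _ ≤ _ := by
          have : 0 ≤ t - t / 2 := by linarith
          gcongr
end
end

section
/- Let F : ℝ³ × ℝ³ → [0,∞) be a Carathéodory function (measurable in x ∈ ℝ³, continuous in u ∈ ℝ³) which is uniformly strictly convex with respect to u: for every compact A ⊂ (ℝ³ × ℝ³) \ {(u,u) : u ∈ ℝ³}, inf{ (1/2)(F(x,u₁) + F(x,u₂)) − F(x,(u₁+u₂)/2) : x ∈ ℝ³, (u₁,u₂) ∈ A } > 0. Let u_n, u : ℝ³ → ℝ³ be measurable with (1/2)(F(·,u_n) + F(·,u)) − F(·,(u_n+u)/2) ≥ 0 and ∫_{ℝ³} [(1/2)(F(x,u_n) + F(x,u)) − F(x,(u_n+u)/2)] dx → 0 as n → ∞. Then for all 0 < r ≤ R the Lebesgue measure of Ω_n := {x ∈ ℝ³ : |u_n(x) − u(x)| ≥ r, |u_n(x)| ≤ R, |u(x)| ≤ R} tends to 0, and consequently a subsequence of (u_n) converges to u almost everywhere on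 ℝ³. -/
open MeasureTheory Filter Real Set
open scoped RealInnerProductSpace ENNReal Topology

noncomputable section

/-!
Write `g x v w = (F x v + F x w) / 2 - F x ((v + w) / 2)` for the convexity defect. Uniform strict
convexity bounds `g` from below only on compact sets away from the diagonal, whereas nothing
prevents `|u_n|` from being unbounded. The point is that midpoint convexity alone makes the defect
grow under doubling, `g x (a + w) a ≤ g x (a + 2w) a` (`defect_doubling`), so every `v` with
`|v - a| ≥ r` can be moved by repeated halving into the compact annulus `r ≤ |v - a| ≤ 2r`. Hence
`g x v a ≥ δ > 0` for all `x`, all `|a| ≤ R` and all `v` with `|v - a| ≥ r` (`defect_coercive`).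

The first claim is then Markov's inequality. For the second, the defects tend to zero in `L¹`, so
they tend to zero almost everywhere along a subsequence, and coercivity turns this into pointwise
convergence of `u_n` to `u₀`.
-/

section Defect

variable {E : Type*} [NormedAddCommGroup E] [NormedSpace ℝ E]

/-- The convexity defect with base point `a` does not decrease when the displacement `w` is
doubled. This combines midpoint convexity at `a + w/2, a + 3w/2` (used twice) and at
`a + w, a + 2w`. -/
lemma defect_doubling (f : E → ℝ)
    (hf : ∀ p q, 0 ≤ (f p + f q) / 2 - f ((2:ℝ)⁻¹ • (p + q))) (a w : E) :
    (f (a + w) + f a) / 2 - f ((2:ℝ)⁻¹ • ((a + w) + a)) ≤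
      (f (a + (2:ℝ) • w) + f a) / 2 - f ((2:ℝ)⁻¹ • ((a + (2:ℝ) • w) + a)) := by
  have h1 := hf (a + (1/2:ℝ) • w) (a + (3/2:ℝ) • w)
  have h2 := hf (a + w) (a + (2:ℝ) • w)
  have e1 : (2:ℝ)⁻¹ • ((a + (1/2:ℝ) • w) + (a + (3/2:ℝ) • w)) = a + w := by module
  have e2 : (2:ℝ)⁻¹ • ((a + w) + (a + (2:ℝ) • w)) = a + (3/2:ℝ) • w := by module
  have e3 : (2:ℝ)⁻¹ • ((a + w) + a) = a + (1/2:ℝ) • w := by module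
  have e4 : (2:ℝ)⁻¹ • ((a + (2:ℝ) • w) + a) = a + w := by module
  rw [e1] at h1
  rw [e2] at h2
  rw [e3, e4]
  linarith

/-- A lower bound for the defect on the annulus `r ≤ ‖w‖ ≤ 2r` persists for all larger
displacements. -/
lemma defect_ge_of_annulus (f : E → ℝ)
    (hf : ∀ p q, 0 ≤ (f p + f q) / 2 - f ((2:ℝ)⁻¹ • (p + q))) (a : E) {r δ : ℝ} (hr : 0 < r)
    (hann : ∀ w, r ≤ ‖w‖ → ‖w‖ ≤ 2 * r →
      δ ≤ (f (a + w) + f a) / 2 - f ((2:ℝ)⁻¹ • ((a + w) + a))) (w : E) (hw : r ≤ ‖w‖) :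
    δ ≤ (f (a + w) + f a) / 2 - f ((2:ℝ)⁻¹ • ((a + w) + a)) := by
  have key : ∀ (n : ℕ) (w : E), r ≤ ‖w‖ → ‖w‖ ≤ 2 ^ n * (2 * r) →
      δ ≤ (f (a + w) + f a) / 2 - f ((2:ℝ)⁻¹ • ((a + w) + a)) := by
    intro n
    induction n with
    | zero => intro w h1 h2; exact hann w h1 (by simpa using h2)
    | succ n ih =>
      intro w h1 h2
      rcases le_total ‖w‖ (2 * r) with h | h
      · exact hann w h1 h
      · have hn : ‖(2:ℝ)⁻¹ • w‖ = ‖w‖ / 2 := by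
          rw [norm_smul, norm_inv, Real.norm_ofNat]; ring
        have h3 := ih ((2:ℝ)⁻¹ • w) (by rw [hn]; linarith) (by
          rw [hn]; rw [pow_succ] at h2; linarith)
        have h4 := defect_doubling f hf a ((2:ℝ)⁻¹ • w)
        rw [smul_inv_smul₀ (two_ne_zero)] at h4
        exact h3.trans h4
  obtain ⟨n, hn⟩ := pow_unbounded_of_one_lt (‖w‖ / (2 * r)) (one_lt_two (α := ℝ))
  exact key n w hw ((div_lt_iff₀ (by positivity)).1 hn).le

/-- The defect is bounded below away from the diagonal, uniformly in `x` and without any bound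
on the point `v`; only the base point `a` has to stay bounded. -/
lemma defect_coercive {X : Type*} [ProperSpace E] (F : X → E → ℝ)
    (husc : ∀ A : Set (E × E), IsCompact A → (∀ p ∈ A, p.1 ≠ p.2) →
      ∃ δ > 0, ∀ x, ∀ p ∈ A,
        δ ≤ (F x p.1 + F x p.2) / 2 - F x ((2:ℝ)⁻¹ • (p.1 + p.2)))
    {r : ℝ} (hr : 0 < r) (R : ℝ) :
    ∃ δ > 0, ∀ x v a, ‖a‖ ≤ R → r ≤ ‖v - a‖ →
      δ ≤ (F x v + F x a) / 2 - F x ((2:ℝ)⁻¹ • (v + a)) := by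
  have hmid : ∀ x p q, 0 ≤ (F x p + F x q) / 2 - F x ((2:ℝ)⁻¹ • (p + q)) := by
    intro x p q
    by_cases hpq : p = q
    · subst hpq
      have : (2:ℝ)⁻¹ • (p + p) = p := by module
      rw [this]; linarith
    · obtain ⟨δ, hδ, h⟩ := husc {(p, q)} isCompact_singleton (by simpa using hpq)
      exact hδ.le.trans (h x (p, q) rfl)
  -- The annulus, fibred over the base points in the closed ball of radius `R`.
  have hcomp : IsCompact {p : E × E | r ≤ ‖p.1 - p.2‖ ∧ ‖p.1 - p.2‖ ≤ 2 * r ∧ ‖p.2‖ ≤ R} := by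
    refine ((isCompact_closedBall (0:E) (2 * r + R)).prod
      (isCompact_closedBall (0:E) R)).of_isClosed_subset ?_ ?_
    · have hsub : Continuous fun p : E × E => ‖p.1 - p.2‖ := by fun_prop
      have hsnd : Continuous fun p : E × E => ‖p.2‖ := by fun_prop
      exact (isClosed_le continuous_const hsub).inter
        ((isClosed_le hsub continuous_const).inter (isClosed_le hsnd continuous_const))
    · rintro ⟨p, q⟩ ⟨-, h2, h3⟩
      simp only [mem_prod, mem_closedBall_zero_iff] at *
      refine ⟨?_, h3⟩
      have := norm_add_le (p - q) q
      rw [sub_add_cancel] at this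
      linarith
  obtain ⟨δ, hδ, h⟩ := husc _ hcomp (by
    rintro ⟨p, q⟩ ⟨h1, -⟩ (rfl : p = q)
    simp only [sub_self, norm_zero] at h1
    linarith)
  refine ⟨δ, hδ, fun x v a ha hv => ?_⟩
  have := defect_ge_of_annulus (F x) (hmid x) a hr
    (fun w h1 h2 => h x (a + w, a) ⟨by simpa using h1, by simpa using h2, ha⟩) (v - a) hv
  simpa using this

end Defect

/-- Key step of Lemma `LemConvWeakIpliesStrong`: let `F : ℝ³ × ℝ³ → [0,∞)` be a
Carathéodory function which is uniformly strictly convex in `u`.  If `u_n, u` are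
measurable, the pointwise convexity defect `(1/2)(F(x,u_n)+F(x,u)) - F(x,(u_n+u)/2)`
is nonnegative and its integral tends to `0`, then for all `0 < r ≤ R` the measure of
`Ω_n = {x : |u_n - u| ≥ r, |u_n| ≤ R, |u| ≤ R}` tends to `0`, and a subsequence of
`(u_n)` converges to `u` almost everywhere on `ℝ³`. -/
theorem usc_convexity_defect_ae_convergence
    (F : EuclideanSpace ℝ (Fin 3) → EuclideanSpace ℝ (Fin 3) → ℝ)
    (hmeas : ∀ u, Measurable fun x => F x u)
    (hcont : ∀ x, Continuous (F x))
    (hnonneg : ∀ x u, 0 ≤ F x u)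
    (husc : ∀ A : Set (EuclideanSpace ℝ (Fin 3) × EuclideanSpace ℝ (Fin 3)),
      IsCompact A → (∀ p ∈ A, p.1 ≠ p.2) →
      ∃ δ > 0, ∀ x, ∀ p ∈ A,
        δ ≤ (F x p.1 + F x p.2) / 2 - F x ((2:ℝ)⁻¹ • (p.1 + p.2)))
    (u : ℕ → EuclideanSpace ℝ (Fin 3) → EuclideanSpace ℝ (Fin 3))
    (u₀ : EuclideanSpace ℝ (Fin 3) → EuclideanSpace ℝ (Fin 3))
    (hu : ∀ n, Measurable (u n)) (hu₀ : Measurable u₀)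
    (hpt : ∀ n x, 0 ≤ (F x (u n x) + F x (u₀ x)) / 2 - F x ((2:ℝ)⁻¹ • (u n x + u₀ x)))
    (hint : Tendsto (fun n => ∫⁻ x, ENNReal.ofReal
        ((F x (u n x) + F x (u₀ x)) / 2 - F x ((2:ℝ)⁻¹ • (u n x + u₀ x))))
      atTop (𝓝 0)) :
    (∀ r R : ℝ, 0 < r → r ≤ R →
      Tendsto (fun n =>
          volume {x | r ≤ ‖u n x - u₀ x‖ ∧ ‖u n x‖ ≤ R ∧ ‖u₀ x‖ ≤ R})
        atTop (𝓝 0)) ∧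
    ∃ ns : ℕ → ℕ, StrictMono ns ∧
      ∀ᵐ x, Tendsto (fun k => u (ns k) x) atTop (𝓝 (u₀ x)) := by
  have hFm : Measurable (fun p : EuclideanSpace ℝ (Fin 3) × EuclideanSpace ℝ (Fin 3) =>
      F p.2 p.1) :=
    measurable_uncurry_of_continuous_of_measurable (u := fun v x => F x v) hcont hmeas
  have hgm : ∀ n, Measurable fun x =>
      (F x (u n x) + F x (u₀ x)) / 2 - F x ((2:ℝ)⁻¹ • (u n x + u₀ x)) := by
    intro n
    have h1 := hFm.comp ((hu n).prodMk measurable_id)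
    have h2 := hFm.comp (hu₀.prodMk measurable_id)
    have h3 := hFm.comp ((((hu n).add hu₀).const_smul (2:ℝ)⁻¹).prodMk measurable_id)
    exact ((h1.add h2).div_const 2).sub h3
  refine ⟨fun r R hr _ => ?_, ?_⟩
  · obtain ⟨δ, hδ, h⟩ := defect_coercive F husc hr R
    have hδ0 : ENNReal.ofReal δ ≠ 0 := by simpa using hδ
    have hlim := ENNReal.Tendsto.div_const hint (b := ENNReal.ofReal δ) (Or.inr hδ0)
    rw [ENNReal.zero_div] at hlim
    refine tendsto_of_tendsto_of_tendsto_of_le_of_le tendsto_const_nhds hlim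
      (fun _ => zero_le) (fun n => ?_)
    refine le_trans (measure_mono ?_)
      (meas_ge_le_lintegral_div (hgm n).ennreal_ofReal.aemeasurable hδ0 ENNReal.ofReal_ne_top)
    rintro x ⟨h1, -, h3⟩
    exact ENNReal.ofReal_le_ofReal (h x _ _ h3 h1)
  · have hL1 : Tendsto (fun n => eLpNorm ((fun x =>
        (F x (u n x) + F x (u₀ x)) / 2 - F x ((2:ℝ)⁻¹ • (u n x + u₀ x))) - fun _ => (0:ℝ))
        1 volume) atTop (𝓝 0) := by
      refine hint.congr fun n => ?_
      rw [eLpNorm_one_eq_lintegral_enorm]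
      refine lintegral_congr fun x => ?_
      simp only [Pi.sub_apply, sub_zero]
      exact (Real.enorm_of_nonneg (hpt n x)).symm
    obtain ⟨ns, hns, hae⟩ := (tendstoInMeasure_of_tendsto_eLpNorm one_ne_zero
      (fun n => (hgm n).aestronglyMeasurable) aestronglyMeasurable_const
      hL1).exists_seq_tendsto_ae
    refine ⟨ns, hns, ?_⟩
    filter_upwards [hae] with x hx
    rw [Metric.tendsto_nhds]
    intro ε hε
    obtain ⟨δ, hδ, h⟩ := defect_coercive F husc hε ‖u₀ x‖
    filter_upwards [hx.eventually_lt_const hδ] with k hk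
    by_contra hcon
    rw [dist_eq_norm, not_lt] at hcon
    exact absurd (h x _ _ le_rfl hcon) (not_le.2 hk)
end
end
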